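/- Let G be a finite connected simple graph on n vertices with m edges that admits a star spanning tree T_s, and let d be the degree vector of G. Then the tree intersection number of T_s satisfies ∩(T_s) = (1/2)[‖d‖₂² - 6m - (n-1)(n-6)], where ‖d‖₂² = Σ_{u ∈ V} d(u)². -/

import Mathlib

open SimpleGraph

/-- The set of edges lying on some path (in a tree: the unique path) between `x` and `y`
in the graph `T`. -/
def pathEdges {V : Type*} (T : SimpleGraph V) (x y : V) : Set (Sym2 V) :=
  {f | ∃ p : T.Walk x y, p.IsPath ∧ f ∈ p.edges}

/-- The edge set of the tree-cycle induced (in the spanning tree `T`) by the cycle-edge `e`: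
the edge `e` itself together with the edges of the (unique) path in `T` between
the endpoints of `e`. -/
def cycEdges {V : Type*} (T : SimpleGraph V) (e : Sym2 V) : Set (Sym2 V) :=
  insert e {f | ∃ x y, e = s(x, y) ∧ f ∈ pathEdges T x y}

/-- The vertex set of the tree-cycle induced (in the spanning tree `T`) by the
cycle-edge `e`. -/
def cycVerts {V : Type*} (T : SimpleGraph V) (e : Sym2 V) : Set V :=
  {v | ∃ x y, e = s(x, y) ∧ ∃ p : T.Walk x y, p.IsPath ∧ v ∈ p.support}

/-- Two tree-cycles (induced by the cycle-edges `e` and `f`) have non-empty intersection: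
some edge of `T` belongs to both of them. -/
def cyclesIntersect {V : Type*} (T : SimpleGraph V) (e f : Sym2 V) : Prop :=
  (cycEdges T e ∩ cycEdges T f ∩ T.edgeSet).Nonempty

/-- The cycle intersection number `∩_T(c)` of the tree-cycle `c` induced by the
cycle-edge `e`: the number of tree-cycles distinct from `c` whose intersection with `c`
is non-empty. -/
noncomputable def cycleInterNum {V : Type*} (G T : SimpleGraph V) (e : Sym2 V) : ℕ :=
  {f | f ∈ G.edgeSet \ T.edgeSet ∧ f ≠ e ∧ cyclesIntersect T e f}.ncard

/-- The tree intersection number `∩_G(T)`: the number of unordered pairs of distinct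
tree-cycles of `T` whose intersection is non-empty. -/
noncomputable def treeInterNum {V : Type*} (G T : SimpleGraph V) : ℕ :=
  {p : Sym2 (Sym2 V) | ∃ e f : Sym2 V, p = s(e, f) ∧ e ≠ f ∧
    e ∈ G.edgeSet \ T.edgeSet ∧ f ∈ G.edgeSet \ T.edgeSet ∧ cyclesIntersect T e f}.ncard

/-- `T` is a star spanning tree of `G` with center `v`. -/
def IsStarSpanningTree {V : Type*} (G T : SimpleGraph V) (v : V) : Prop :=
  T ≤ G ∧ T.IsTree ∧ ∀ u, u ≠ v → T.Adj v u

/-- `closest-point-set(w, c)`: the set of vertices outside the tree-cycle `c` (induced by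
the cycle-edge `e`) whose closest point on `c` (with respect to distance in `T`) is `w`. -/
def closestPointSet {V : Type*} (T : SimpleGraph V) (e : Sym2 V) (w : V) : Set V :=
  {v | v ∉ cycVerts T e ∧ ∀ u ∈ cycVerts T e, T.dist v w ≤ T.dist v u}

/-!
Every tree-path between two non-central vertices of a star runs through the center, so the
tree-cycle of a cycle-edge `xy` meets the star in its two spokes at `x` and `y`. Two tree-cycles
therefore intersect exactly when their cycle-edges share an endpoint, and the tree intersection
number of the star `T` is the number of edges of the line graph of `G \ T`, that is
`∑ u, (deg u).choose 2` with degrees in `G \ T`. Removing the star isolates the center and lowers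
every other degree by one.
-/

section

variable {V : Type*}

section TreeCycles

variable {T : SimpleGraph V} {x y : V}

lemma pathEdges_comm (T : SimpleGraph V) (x y : V) : pathEdges T x y = pathEdges T y x := by
  have reverse_subset (a b : V) : pathEdges T a b ⊆ pathEdges T b a := by
    rintro g ⟨p, hp, hg⟩
    exact ⟨p.reverse, hp.reverse, by simpa using hg⟩
  exact (reverse_subset x y).antisymm (reverse_subset y x)

lemma cycEdges_mk (T : SimpleGraph V) (x y : V) :
    cycEdges T s(x, y) = insert s(x, y) (pathEdges T x y) := by
  refine congrArg (insert s(x, y)) (Set.ext fun g => ⟨?_, fun hg => ⟨x, y, rfl, hg⟩⟩)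
  rintro ⟨a, b, hab, hg⟩
  obtain ⟨rfl, rfl⟩ | ⟨rfl, rfl⟩ := Sym2.eq_iff.mp hab
  · exact hg
  · rwa [pathEdges_comm]

lemma pathEdges_eq_of_isPath (hT : T.IsAcyclic) {p : T.Walk x y} (hp : p.IsPath) :
    pathEdges T x y = {g | g ∈ p.edges} := by
  refine Set.ext fun g => ⟨?_, fun hg => ⟨p, hp, hg⟩⟩
  rintro ⟨q, hq, hg⟩
  obtain rfl : q = p :=
    congrArg Subtype.val ((hT.subsingleton_path x y).elim ⟨q, hq⟩ ⟨p, hp⟩)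
  exact hg

end TreeCycles

section Star

variable {v : V}

lemma IsStarSpanningTree.eq_starGraph {G T : SimpleGraph V} (h : IsStarSpanningTree G T v) :
    T = starGraph v := by
  obtain ⟨-, hT, hv⟩ := h
  have star_le : starGraph v ≤ T := by
    intro a b hab
    obtain ⟨hne, rfl | rfl⟩ := starGraph_adj.mp hab
    · exact hv b hne.symm
    · exact (hv a hne).symm
  exact ((isTree_iff_minimal_connected.mp hT).eq_of_le (connected_starGraph v) star_le).symm

lemma pathEdges_starGraph {x y : V} (hx : x ≠ v) (hy : y ≠ v) (hxy : x ≠ y) :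
    pathEdges (starGraph v) x y = {s(v, x), s(v, y)} := by
  let p : (starGraph v).Walk x y :=
    .cons (starGraph_center_adj' hx.symm) (.cons (starGraph_center_adj hy.symm) .nil)
  have hp : p.IsPath := by simp [p, hx, hy.symm, hxy]
  rw [pathEdges_eq_of_isPath (isAcyclic_starGraph v) hp]
  ext g
  simp [p, Sym2.eq_swap (a := x) (b := v)]

lemma cycEdges_starGraph_inter_edgeSet {e : Sym2 V} (he : ¬ e.IsDiag) (hv : v ∉ e) :
    cycEdges (starGraph v) e ∩ (starGraph v).edgeSet = {g | ∃ u ∈ e, g = s(v, u)} := by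
  induction e with | _ x y
  rw [Sym2.mk_isDiag_iff] at he
  rw [Sym2.mem_iff, not_or] at hv
  obtain ⟨hx, hy⟩ := hv
  have hxy : s(x, y) ∉ (starGraph v).edgeSet := by simp [Ne.symm hx, Ne.symm hy]
  have spokes_subset : {s(v, x), s(v, y)} ⊆ (starGraph v).edgeSet := by
    simp [Set.insert_subset_iff, hx, hy]
  rw [cycEdges_mk, pathEdges_starGraph (Ne.symm hx) (Ne.symm hy) he,
    Set.insert_inter_of_notMem hxy, Set.inter_eq_left.mpr spokes_subset]
  ext g
  simp

lemma cyclesIntersect_starGraph_iff {e f : Sym2 V} (he : ¬ e.IsDiag) (hve : v ∉ e)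
    (hf : ¬ f.IsDiag) (hvf : v ∉ f) :
    cyclesIntersect (starGraph v) e f ↔ ∃ u, u ∈ e ∧ u ∈ f := by
  rw [cyclesIntersect, Set.inter_inter_distrib_right, cycEdges_starGraph_inter_edgeSet he hve,
    cycEdges_starGraph_inter_edgeSet hf hvf]
  constructor
  · rintro ⟨-, ⟨u, hu, rfl⟩, w, hw, huw⟩
    obtain rfl := Sym2.congr_right.mp huw
    exact ⟨u, hu, hw⟩
  · rintro ⟨u, hue, huf⟩
    exact ⟨s(v, u), ⟨u, hue, rfl⟩, u, huf, rfl⟩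

lemma isIsolated_sdiff_starGraph (G : SimpleGraph V) (v : V) : (G \ starGraph v).IsIsolated v :=
  fun _ h => h.2 (starGraph_center_adj h.1.ne)

lemma notMem_of_mem_edgeSet_sdiff_starGraph {G : SimpleGraph V} {e : Sym2 V}
    (he : e ∈ (G \ starGraph v).edgeSet) : v ∉ e := by
  induction e with | _ x y
  intro hv
  obtain rfl | rfl := Sym2.mem_iff.mp hv
  · exact isIsolated_sdiff_starGraph G v _ he
  · exact isIsolated_sdiff_starGraph G v _ he.symm

end Star

section LineGraph

variable (H : SimpleGraph V)

/-- The unordered pairs of distinct edges of `H` with a common endpoint. These are the edges of the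
line graph of `H`, taken in `Sym2 (Sym2 V)` instead of `Sym2 H.edgeSet`, so that they can be
compared with the pairs of cycle-edges counted by `treeInterNum`. -/
def adjacentEdgePairs : Set (Sym2 (Sym2 V)) :=
  {p | ∃ e f : Sym2 V, p = s(e, f) ∧ e ≠ f ∧ e ∈ H.edgeSet ∧ f ∈ H.edgeSet ∧ ∃ u, u ∈ e ∧ u ∈ f}

lemma image_map_val_edgeSet_lineGraph :
    Sym2.map Subtype.val '' H.lineGraph.edgeSet = adjacentEdgePairs H := by
  ext p
  constructor
  · rintro ⟨q, hq, rfl⟩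
    induction q with | _ e f
    obtain ⟨hne, hu⟩ := lineGraph_adj_iff_exists.mp hq
    exact ⟨e, f, rfl, Subtype.coe_ne_coe.mpr hne, e.2, f.2, hu⟩
  · rintro ⟨e, f, rfl, hne, he, hf, hu⟩
    exact ⟨s(⟨e, he⟩, ⟨f, hf⟩),
      lineGraph_adj_iff_exists.mpr ⟨Subtype.coe_ne_coe.mp hne, hu⟩, rfl⟩

lemma ncard_adjacentEdgePairs : (adjacentEdgePairs H).ncard = H.lineGraph.edgeSet.ncard := by
  rw [← image_map_val_edgeSet_lineGraph,
    Set.ncard_image_of_injective _ (Sym2.map.injective Subtype.val_injective)]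

section IncidentPairs

variable [DecidableEq V] [H.LocallyFinite]

/-- The unordered pairs of distinct edges of `H` that meet at the vertex `u`; they are the edges
of the clique that `u` induces in the line graph of `H`. -/
def incidentPairs (u : V) : Finset (Sym2 (Sym2 V)) :=
  (H.incidenceFinset u).offDiag.image Sym2.mk.uncurry

variable {H} in
lemma mk_mem_incidentPairs {u : V} {e f : Sym2 V} :
    s(e, f) ∈ incidentPairs H u ↔ e ∈ H.incidenceSet u ∧ f ∈ H.incidenceSet u ∧ e ≠ f := by
  simp only [incidentPairs, Finset.mem_image, Finset.mem_offDiag, mem_incidenceFinset,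
    Prod.exists, Function.uncurry_apply_pair]
  constructor
  · rintro ⟨a, b, ⟨ha, hb, hne⟩, hab⟩
    obtain ⟨rfl, rfl⟩ | ⟨rfl, rfl⟩ := Sym2.eq_iff.mp hab
    · exact ⟨ha, hb, hne⟩
    · exact ⟨hb, ha, hne.symm⟩
  · exact fun h => ⟨e, f, h, rfl⟩

lemma card_incidentPairs (u : V) : (incidentPairs H u).card = (H.degree u).choose 2 := by
  rw [incidentPairs, Sym2.card_image_offDiag, card_incidenceFinset_eq_degree]

lemma pairwise_disjoint_incidentPairs : Pairwise (Function.onFun Disjoint (incidentPairs H)) := by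
  intro u w huw
  rw [Function.onFun, Finset.disjoint_left]
  intro p hu hw
  induction p with | _ e f
  obtain ⟨heu, hfu, hne⟩ := mk_mem_incidentPairs.mp hu
  obtain ⟨hew, hfw, -⟩ := mk_mem_incidentPairs.mp hw
  have he : e = s(u, w) := H.incidenceSet_inter_incidenceSet_subset huw ⟨heu, hew⟩
  have hf : f = s(u, w) := H.incidenceSet_inter_incidenceSet_subset huw ⟨hfu, hfw⟩
  exact hne (he.trans hf.symm)

lemma iUnion_incidentPairs :
    ⋃ u, (incidentPairs H u : Set (Sym2 (Sym2 V))) = adjacentEdgePairs H := by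
  ext p
  simp only [Set.mem_iUnion, Finset.mem_coe]
  constructor
  · rintro ⟨u, hu⟩
    induction p with | _ e f
    obtain ⟨⟨he, hue⟩, ⟨hf, huf⟩, hne⟩ := mk_mem_incidentPairs.mp hu
    exact ⟨e, f, rfl, hne, he, hf, u, hue, huf⟩
  · rintro ⟨e, f, rfl, hne, he, hf, u, hue, huf⟩
    exact ⟨u, mk_mem_incidentPairs.mpr ⟨⟨he, hue⟩, ⟨hf, huf⟩, hne⟩⟩

end IncidentPairs

theorem ncard_edgeSet_lineGraph [Fintype V] [H.LocallyFinite] :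
    H.lineGraph.edgeSet.ncard = ∑ u, (H.degree u).choose 2 := by
  classical
  calc H.lineGraph.edgeSet.ncard
      = (Finset.univ.biUnion (incidentPairs H)).card := by
        rw [← ncard_adjacentEdgePairs, ← iUnion_incidentPairs, ← Set.ncard_coe_finset,
          Finset.coe_biUnion]
        simp only [Finset.coe_univ, Set.mem_univ, Set.iUnion_true]
    _ = ∑ u, (incidentPairs H u).card :=
        Finset.card_biUnion fun _ _ _ _ huw => pairwise_disjoint_incidentPairs H huw
    _ = ∑ u, (H.degree u).choose 2 := Finset.sum_congr rfl fun u _ => card_incidentPairs H u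

end LineGraph

theorem treeInterNum_starGraph (G : SimpleGraph V) (v : V) :
    treeInterNum G (starGraph v) = (G \ starGraph v).lineGraph.edgeSet.ncard := by
  rw [← ncard_adjacentEdgePairs, treeInterNum, ← edgeSet_sdiff]
  refine congrArg Set.ncard (Set.ext fun p => exists₂_congr fun e f => and_congr_right fun _ =>
    and_congr_right fun _ => and_congr_right fun he => and_congr_right fun hf => ?_)
  exact cyclesIntersect_starGraph_iff
    (not_isDiag_of_mem_edgeSet _ he) (notMem_of_mem_edgeSet_sdiff_starGraph he)
    (not_isDiag_of_mem_edgeSet _ hf) (notMem_of_mem_edgeSet_sdiff_starGraph hf)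

section Degrees

lemma degree_sdiff_add_degree_of_le {G T : SimpleGraph V} (h : T ≤ G) (u : V)
    [Fintype (G.neighborSet u)] [Fintype (T.neighborSet u)] [Fintype ((G \ T).neighborSet u)] :
    (G \ T).degree u + T.degree u = G.degree u := by
  classical
  have neighbor_subset : T.neighborFinset u ⊆ G.neighborFinset u := by
    intro w
    simpa only [mem_neighborFinset] using @h u w
  simp only [← card_neighborFinset_eq_degree, neighborFinset_sdiff]
  exact Finset.card_sdiff_add_card_eq_card neighbor_subset

variable [Fintype V] [DecidableEq V] {G : SimpleGraph V} [DecidableRel G.Adj] {v : V}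

lemma degree_sdiff_starGraph_add_one (h : starGraph v ≤ G) {u : V} (hu : u ≠ v) :
    (G \ starGraph v).degree u + 1 = G.degree u := by
  rw [← degree_starGraph_of_ne_center hu, degree_sdiff_add_degree_of_le h]

theorem sum_choose_two_degree_sdiff_starGraph (h : starGraph v ≤ G) :
    (∑ u, ((G \ starGraph v).degree u).choose 2 : ℚ)
      = 1 / 2 * ((∑ u, (G.degree u : ℚ) ^ 2) - 6 * G.edgeFinset.card
        - (Fintype.card V - 1) * (Fintype.card V - 6)) := by
  have choose_of_ne (u : V) (hu : u ∈ Finset.univ.erase v) :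
      (((G \ starGraph v).degree u).choose 2 : ℚ)
        = 1 / 2 * ((G.degree u : ℚ) ^ 2 - 3 * G.degree u + 2) := by
    rw [Nat.cast_choose_two, ← degree_sdiff_starGraph_add_one h (Finset.ne_of_mem_erase hu)]
    push_cast
    ring
  have choose_center : (((G \ starGraph v).degree v).choose 2 : ℚ) = 0 := by
    simp [(isIsolated_sdiff_starGraph G v).degree_eq_zero]
  have degree_center : (G.degree v : ℚ) = Fintype.card V - 1 := by
    rw [(G.degree_eq_card_sub_one v).mpr fun _ hw => h (starGraph_center_adj hw),
      Nat.cast_pred (Fintype.card_pos_iff.mpr ⟨v⟩)]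
  have sum_degrees : ∑ u, (G.degree u : ℚ) = 2 * G.edgeFinset.card :=
    mod_cast G.sum_degrees_eq_twice_card_edges
  rw [← Finset.add_sum_erase _ _ (Finset.mem_univ v), choose_center, zero_add,
    Finset.sum_congr rfl choose_of_ne,
    Finset.sum_erase_eq_sub (Finset.mem_univ v), degree_center, ← Finset.mul_sum,
    Finset.sum_add_distrib, Finset.sum_sub_distrib, ← Finset.mul_sum, sum_degrees,
    Finset.sum_const, Finset.card_univ, nsmul_eq_mul]
  ring

end Degrees

end

/-- If a connected graph `G` on `n` vertices with `m` edges admits a star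
spanning tree `T_s`, and `d` is the degree vector of `G`, then
`∩(T_s) = (1/2)[‖d‖₂² - 6m - (n-1)(n-6)]`. -/
theorem stmt_12 {V : Type*} [Fintype V] (G Ts : SimpleGraph V) [DecidableRel G.Adj]
    (hG : G.Connected) (v : V) (hTs : IsStarSpanningTree G Ts v)
    (n m : ℕ) (hn : Fintype.card V = n) (hm : G.edgeSet.ncard = m) :
    (treeInterNum G Ts : ℚ)
      = (1 / 2) * ((∑ u : V, (G.degree u : ℚ) ^ 2) - 6 * (m : ℚ)
          - ((n : ℚ) - 1) * ((n : ℚ) - 6)) := by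
  classical
  obtain rfl := hTs.eq_starGraph
  subst hn hm
  rw [treeInterNum_starGraph, ncard_edgeSet_lineGraph, Nat.cast_sum,
    sum_choose_two_degree_sdiff_starGraph hTs.1, ← coe_edgeFinset, Set.ncard_coe_finset]
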